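/- Let L > 0, λ > 0, c > 0, let f : [0,L] → ℝ be continuous with f(x) > 0 for x ∈ [0,L), define g(x) = 1/f(x), p̃(x) = (1/c) ∫₀ˣ f(s) ds and T = p̃(L). Let p₀ : ℝ → ℝ be bounded and continuous, differentiable on (T,∞), satisfying p₀′(t) = c g(0) λ ( p₀(t − T) − p₀(t) ) for all t > T, and define p₁(x,t) = (f(x)/f(0)) λ p₀(t − p̃(x)). Then for every t > 2T, every l ∈ (0,L), and every real number p₀*, the function x ↦ c g(x) p₁(x,t) is differentiable on (0,l) and sup_{x ∈ (0,l)} | ∂/∂x [ c g(x) p₁(x,t) ] | ≤ 2 c (g(0) λ)² · ( sup_{x ∈ [0,l]} f(x) ) · sup_{τ ∈ [t − 2T, t]} | p₀(τ) − p₀* |. -/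

import Mathlib

/-!
On `[0, L)` the factor `g = 1 / f` cancels the profile of `p₁`, so that
`c g(x) p₁(x, t) = c g(0) λ p₀(t - p̃(x))`. As `p̃' = f / c`, its `x`-derivative is
`-g(0) λ f(x) p₀'(t - p̃(x))`. Since `0 < p̃(x) < T`, the delay equation holds at `t - p̃(x)` and
expresses `p₀'` through the values of `p₀` at two points of `[t - 2T, t]`. Comparing both values
with `p₀*` costs the factor `2`.
-/

open Set MeasureTheory

section RepairTime

/-- The rescaled cumulative repair time `p̃` of a failure-mode density `f` under the control
weight `c`; the total repair time `T` is its value at `L`. -/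
noncomputable def repairTime (c : ℝ) (f : ℝ → ℝ) (x : ℝ) : ℝ := (1 / c) * ∫ s in (0 : ℝ)..x, f s

variable {c L x : ℝ} {f : ℝ → ℝ}

theorem repairTime_zero (c : ℝ) (f : ℝ → ℝ) : repairTime c f 0 = 0 := by
  simp [repairTime]

theorem strictMonoOn_repairTime (hc : 0 < c) (hf : IntervalIntegrable f volume 0 L)
    (hpos : ∀ x ∈ Ioo 0 L, 0 < f x) : StrictMonoOn (repairTime c f) (Icc 0 L) := by
  intro x hx y hy hxy
  have hint_x : IntervalIntegrable f volume 0 x :=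
    hf.mono_set (uIcc_subset_uIcc left_mem_uIcc (Icc_subset_uIcc hx))
  have hint_xy : IntervalIntegrable f volume x y :=
    hf.mono_set (uIcc_subset_uIcc (Icc_subset_uIcc hx) (Icc_subset_uIcc hy))
  have hpos_xy : 0 < ∫ s in x..y, f s :=
    intervalIntegral.intervalIntegral_pos_of_pos_on hint_xy
      (fun s hs => hpos s ⟨hx.1.trans_lt hs.1, hs.2.trans_le hy.2⟩) hxy
  refine mul_lt_mul_of_pos_left ?_ (one_div_pos.mpr hc)
  rw [← intervalIntegral.integral_add_adjacent_intervals hint_x hint_xy]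
  exact lt_add_of_pos_right _ hpos_xy

theorem repairTime_mem_Ioo (hc : 0 < c) (hf : IntervalIntegrable f volume 0 L)
    (hpos : ∀ x ∈ Ioo 0 L, 0 < f x) (hx : x ∈ Ioo 0 L) :
    repairTime c f x ∈ Ioo 0 (repairTime c f L) := by
  have hmono := strictMonoOn_repairTime hc hf hpos
  have hL : 0 ≤ L := (hx.1.trans hx.2).le
  have hx' : x ∈ Icc 0 L := Ioo_subset_Icc_self hx
  refine ⟨?_, hmono hx' (right_mem_Icc.mpr hL) hx.2⟩
  simpa only [repairTime_zero] using hmono (left_mem_Icc.mpr hL) hx' hx.1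

theorem hasDerivAt_repairTime (c : ℝ) (hf : IntervalIntegrable f volume 0 L)
    (hcont : ContinuousOn f (Ioo 0 L)) (hx : x ∈ Ioo 0 L) :
    HasDerivAt (repairTime c f) ((1 / c) * f x) x := by
  have hint : IntervalIntegrable f volume 0 x :=
    hf.mono_set (uIcc_subset_uIcc left_mem_uIcc (Icc_subset_uIcc (Ioo_subset_Icc_self hx)))
  exact (intervalIntegral.integral_hasDerivAt_right hint
    (hcont.stronglyMeasurableAtFilter isOpen_Ioo x hx)
    (hcont.continuousAt (isOpen_Ioo.mem_nhds hx))).const_mul (1 / c)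

end RepairTime

theorem norm_sub_le_two_mul_sSup_norm_sub {α E : Type*} [SeminormedAddCommGroup E] {p : α → E}
    {s : Set α} (hp : Bornology.IsBounded (p '' s)) {a b : α} (ha : a ∈ s) (hb : b ∈ s) (q : E) :
    ‖p a - p b‖ ≤ 2 * sSup ((fun τ => ‖p τ - q‖) '' s) := by
  have hbdd : BddAbove ((fun τ => ‖p τ - q‖) '' s) := by
    obtain ⟨C, hC⟩ := hp.subset_closedBall q
    refine ⟨C, forall_mem_image.mpr fun τ hτ => ?_⟩
    exact mem_closedBall_iff_norm.mp (hC (mem_image_of_mem p hτ))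
  calc ‖p a - p b‖ ≤ ‖p a - q‖ + ‖p b - q‖ := by
        simpa only [dist_eq_norm] using dist_triangle_right (p a) (p b) q
    _ ≤ 2 * sSup ((fun τ => ‖p τ - q‖) '' s) := by
        linarith [le_csSup hbdd (mem_image_of_mem (fun τ => ‖p τ - q‖) ha),
          le_csSup hbdd (mem_image_of_mem (fun τ => ‖p τ - q‖) hb)]

section Feedback

variable {E : Type*} [NormedAddCommGroup E] [NormedSpace ℝ E]

/-- The feedback term `c g(x) p₁(x, t)` of the closed-loop system, where `g = 1 / f` and
`p₁(x, t) = (f(x) / f(0)) λ p₀(t - p̃(x))`. The good-mode probability `p₀` may take values in any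
real normed space. -/
noncomputable def feedbackTerm (c lam : ℝ) (f : ℝ → ℝ) (p₀ : ℝ → E) (t x : ℝ) : E :=
  (c * (1 / f x)) • (f x / f 0 * lam) • p₀ (t - repairTime c f x)

variable {c lam L t x : ℝ} {f : ℝ → ℝ} {p₀ : ℝ → E}

theorem feedbackTerm_eq_smul (hx : f x ≠ 0) :
    feedbackTerm c lam f p₀ t x = (c * (1 / f 0) * lam) • p₀ (t - repairTime c f x) := by
  rw [feedbackTerm, smul_smul]
  congr 1
  field_simp

theorem hasDerivAt_feedbackTerm (hc : c ≠ 0) (hf : IntervalIntegrable f volume 0 L)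
    (hcont : ContinuousOn f (Ioo 0 L)) (hne : ∀ x ∈ Ioo 0 L, f x ≠ 0) (hx : x ∈ Ioo 0 L)
    {p₀' : E} (hp₀ : HasDerivAt p₀ p₀' (t - repairTime c f x)) :
    HasDerivAt (feedbackTerm c lam f p₀ t) (-(1 / f 0 * lam * f x) • p₀') x := by
  have hdelay : HasDerivAt (fun y => t - repairTime c f y) (-((1 / c) * f x)) x :=
    (hasDerivAt_repairTime c hf hcont hx).const_sub t
  have hderiv := (hp₀.scomp x hdelay).const_smul (c * (1 / f 0) * lam)
  have hcoeff : c * (1 / f 0) * lam * -((1 / c) * f x) = -(1 / f 0 * lam * f x) := by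
    field_simp
  rw [smul_smul, hcoeff] at hderiv
  refine hderiv.congr_of_eventuallyEq ?_
  filter_upwards [isOpen_Ioo.mem_nhds hx] with y hy
  exact feedbackTerm_eq_smul (hne y hy)

theorem hasDerivAt_feedbackTerm_of_delay (hc : 0 < c) (hf : IntervalIntegrable f volume 0 L)
    (hcont : ContinuousOn f (Ioo 0 L)) (hpos : ∀ x ∈ Ioo 0 L, 0 < f x)
    (hode : ∀ s ∈ Ioo (t - repairTime c f L) t, HasDerivAt p₀
      ((c * (1 / f 0) * lam) • (p₀ (s - repairTime c f L) - p₀ s)) s)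
    (hx : x ∈ Ioo 0 L) :
    HasDerivAt (feedbackTerm c lam f p₀ t)
      (-(c * (1 / f 0 * lam) ^ 2 * f x) •
        (p₀ (t - repairTime c f x - repairTime c f L) - p₀ (t - repairTime c f x))) x := by
  obtain ⟨hτ_pos, hτ_lt⟩ := repairTime_mem_Ioo hc hf hpos hx
  have hp₀ := hode (t - repairTime c f x) ⟨by linarith, by linarith⟩
  convert hasDerivAt_feedbackTerm (lam := lam) hc.ne' hf hcont (fun y hy => (hpos y hy).ne') hx hp₀
    using 1
  rw [smul_smul]
  congr 1
  ring

theorem norm_deriv_feedbackTerm_le (hc : 0 < c) (hf : IntervalIntegrable f volume 0 L)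
    (hcont : ContinuousOn f (Ioo 0 L)) (hpos : ∀ x ∈ Ioo 0 L, 0 < f x)
    (hode : ∀ s ∈ Ioo (t - repairTime c f L) t, HasDerivAt p₀
      ((c * (1 / f 0) * lam) • (p₀ (s - repairTime c f L) - p₀ s)) s)
    (hbdd : Bornology.IsBounded (p₀ '' Icc (t - 2 * repairTime c f L) t))
    (hx : x ∈ Ioo 0 L) (q : E) :
    ‖deriv (feedbackTerm c lam f p₀ t) x‖ ≤ 2 * c * (1 / f 0 * lam) ^ 2 * f x *
      sSup ((fun τ => ‖p₀ τ - q‖) '' Icc (t - 2 * repairTime c f L) t) := by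
  obtain ⟨hτ_pos, hτ_lt⟩ := repairTime_mem_Ioo hc hf hpos hx
  have hcoeff : 0 ≤ c * (1 / f 0 * lam) ^ 2 * f x :=
    mul_nonneg (mul_nonneg hc.le (sq_nonneg _)) (hpos x hx).le
  have hdev := norm_sub_le_two_mul_sSup_norm_sub hbdd
    (a := t - repairTime c f x - repairTime c f L) (b := t - repairTime c f x)
    ⟨by linarith, by linarith⟩ ⟨by linarith, by linarith⟩ q
  rw [(hasDerivAt_feedbackTerm_of_delay hc hf hcont hpos hode hx).deriv, norm_smul, norm_neg,
    Real.norm_of_nonneg hcoeff]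
  exact (mul_le_mul_of_nonneg_left hdev hcoeff).trans_eq (by ring)

theorem stmt16_general (hc : 0 < c) (hf : IntervalIntegrable f volume 0 L)
    (hfc : ContinuousOn f (Ico 0 L)) (hfpos : ∀ x ∈ Ico 0 L, 0 < f x)
    {g : ℝ → ℝ} (hg : ∀ x, g x = 1 / f x)
    {ptilde : ℝ → ℝ} (hpt : ∀ x, ptilde x = (1 / c) * ∫ s in (0 : ℝ)..x, f s)
    {T : ℝ} (hT : T = ptilde L)
    (hode : ∀ s ∈ Ioo (t - T) t, HasDerivAt p₀ ((c * g 0 * lam) • (p₀ (s - T) - p₀ s)) s)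
    (hbdd : Bornology.IsBounded (p₀ '' Icc (t - 2 * T) t))
    {p₁ : ℝ → ℝ → E} (hp₁ : ∀ x t, p₁ x t = (f x / f 0 * lam) • p₀ (t - ptilde x))
    {l : ℝ} (hl : l < L) (q : E) :
    DifferentiableOn ℝ (fun x => (c * g x) • p₁ x t) (Ioo 0 l) ∧
      ∀ x ∈ Ioo 0 l, ‖deriv (fun y => (c * g y) • p₁ y t) x‖ ≤
        2 * c * (g 0 * lam) ^ 2 * sSup (f '' Icc 0 l) *
          sSup ((fun τ => ‖p₀ τ - q‖) '' Icc (t - 2 * T) t) := by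
  obtain rfl : ptilde = repairTime c f := funext hpt
  have hterm : (fun x => (c * g x) • p₁ x t) = feedbackTerm c lam f p₀ t := by
    ext x
    rw [hg, hp₁, feedbackTerm]
  rw [hterm, hg 0]
  rw [hg 0] at hode
  subst hT
  have hcont : ContinuousOn f (Ioo 0 L) := hfc.mono Ioo_subset_Ico_self
  have hpos : ∀ x ∈ Ioo 0 L, 0 < f x := fun x hx => hfpos x (Ioo_subset_Ico_self hx)
  have hsub : Ioo 0 l ⊆ Ioo 0 L := Ioo_subset_Ioo_right hl.le
  refine ⟨fun x hx => (hasDerivAt_feedbackTerm_of_delay hc hf hcont hpos hode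
    (hsub hx)).differentiableAt.differentiableWithinAt, fun x hx => ?_⟩
  have hfx : f x ≤ sSup (f '' Icc 0 l) :=
    le_csSup (isCompact_Icc.bddAbove_image (hfc.mono (Icc_subset_Ico_right hl)))
      (mem_image_of_mem f (Ioo_subset_Icc_self hx))
  have hdev : 0 ≤ sSup ((fun τ => ‖p₀ τ - q‖) '' Icc (t - 2 * repairTime c f L) t) :=
    Real.sSup_nonneg (forall_mem_image.mpr fun _ _ => norm_nonneg _)
  exact (norm_deriv_feedbackTerm_le hc hf hcont hpos hode hbdd (hsub hx) q).trans (by gcongr)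

end Feedback

/-- Pointwise bound on the feedback term `∂(c g(x) p₁(x,t))/∂x` of the closed-loop system
for `t > 2T`, in terms of the deviation of `p₀` from a target value `p₀*`. -/
theorem stmt16 (L lam c : ℝ) (hL : 0 < L) (hlam : 0 < lam) (hc : 0 < c)
    (f : ℝ → ℝ) (hfc : ContinuousOn f (Set.Icc 0 L))
    (hfpos : ∀ x ∈ Set.Ico (0:ℝ) L, 0 < f x)
    (g : ℝ → ℝ) (hg : ∀ x, g x = 1 / f x)
    (ptilde : ℝ → ℝ) (hpt : ∀ x, ptilde x = (1 / c) * ∫ s in (0:ℝ)..x, f s)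
    (T : ℝ) (hT : T = ptilde L)
    (p₀ : ℝ → ℝ) (hp₀c : Continuous p₀) (hp₀bdd : ∃ C, ∀ s : ℝ, |p₀ s| ≤ C)
    (hode : ∀ t > T, HasDerivAt p₀ (c * g 0 * lam * (p₀ (t - T) - p₀ t)) t)
    (p₁ : ℝ → ℝ → ℝ)
    (hp₁ : ∀ x t : ℝ, p₁ x t = (f x / f 0) * lam * p₀ (t - ptilde x)) :
    ∀ t > 2 * T, ∀ l ∈ Set.Ioo (0:ℝ) L, ∀ p₀s : ℝ,
      DifferentiableOn ℝ (fun x => c * g x * p₁ x t) (Set.Ioo 0 l) ∧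
      ∀ x ∈ Set.Ioo (0:ℝ) l,
        |deriv (fun y => c * g y * p₁ y t) x| ≤
          2 * c * (g 0 * lam) ^ 2 * sSup (f '' Set.Icc 0 l) *
            sSup ((fun τ => |p₀ τ - p₀s|) '' Set.Icc (t - 2 * T) t) := by
  intro t ht l hl p₀s
  exact stmt16_general hc (hfc.intervalIntegrable_of_Icc hL.le) (hfc.mono Ico_subset_Icc_self)
    hfpos hg hpt hT (fun s hs => hode s (by linarith [hs.1])) (isCompact_Icc.image hp₀c).isBounded
    hp₁ hl.2 p₀s
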